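/- Let $n\ge 1$ and let $l_1,\dots,l_n$ be even positive integers. Let $G$ be a complex function that is holomorphic on an open set containing the strip $|\mathrm{Re}(u)|\le 3/2$, bounded on this strip, and satisfies $G(u)=G(-u)$ there and $G(0)=1$. For even positive integers $k_1,\dots,k_n$ put $$\gamma(u)=\prod_{j=1}^n\frac{\Gamma\left(\frac12+u+\frac{|k_j-l_j|}2\right)\Gamma\left(u-\frac12+\frac{k_j+l_j}2\right)}{\Gamma\left(\frac12+\frac{|k_j-l_j|}2\right)\Gamma\left(\frac{k_j+l_j}2-\frac12\right)},\qquad V(y)=\frac1{2\pi i}\int_{\mathrm{Re}(u)=3/2}y^{-u}\,\gamma(u)\,G(u)\,\frac{du}u\quad(y>0).$$ Let $a\ge 0$ be an integer and $\alpha\in(0,1/2)$, and put $\delta_0=1$ and $\delta_a=0$ for $a>0$. (i) For all even positive integers $k_1,\dots,k_n$ the integral defining $V(y)$ converges absolutely for every $y>0$, the function $V$ is infinitely differentiable on $(0,\infty)$, and there is a constant $C>0$, depending only on $a$, $\alpha$, $n$, $G$ and the weights $k_j,l_j$, such that for all $y>0$ $$\left|y^aV^{(a)}(y)-\delta_a\right|\le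 C\left(\frac{y}{\prod_{j=1}^nk_j^2}\right)^{\alpha}.$$ (ii) If moreover $(1+|u|)^{a+1}|G(u)|$ is bounded on the strip $|\mathrm{Re}(u)|\le 3/2$, then the constant $C$ in (i) can be chosen independently of $k_1,\dots,k_n$. -/

import Mathlib

/-- The archimedean factor `γ(u) = γ(1/2, u)` of the Rankin–Selberg convolution of weights `k`
and `l`:
`γ(u) = ∏_{j=1}^n [Γ(1/2 + u + |kⱼ-lⱼ|/2) Γ(u - 1/2 + (kⱼ+lⱼ)/2)]
        / [Γ(1/2 + |kⱼ-lⱼ|/2) Γ((kⱼ+lⱼ)/2 - 1/2)]`. -/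
noncomputable def rankinSelbergGamma (n : ℕ) (k l : Fin n → ℕ) (u : ℂ) : ℂ :=
  ∏ j : Fin n,
    (Complex.Gamma (1 / 2 + u + ((|(k j : ℤ) - (l j : ℤ)| : ℤ) : ℂ) / 2) *
        Complex.Gamma (u - 1 / 2 + ((k j : ℂ) + (l j : ℂ)) / 2)) /
      (Complex.Gamma (1 / 2 + ((|(k j : ℤ) - (l j : ℤ)| : ℤ) : ℂ) / 2) *
        Complex.Gamma (((k j : ℂ) + (l j : ℂ)) / 2 - 1 / 2))

/-- The admissible test functions `G`: holomorphic on an open set containing the closed strip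
`|Re u| ≤ 3/2`, bounded on the strip, even, and normalized by `G(0) = 1`. -/
structure IsAdmissibleTestFunction (G : ℂ → ℂ) : Prop where
  holomorphic : ∃ U : Set ℂ, IsOpen U ∧ {u : ℂ | |u.re| ≤ 3 / 2} ⊆ U ∧ DifferentiableOn ℂ G U
  bounded : ∃ M : ℝ, ∀ u : ℂ, |u.re| ≤ 3 / 2 → ‖G u‖ ≤ M
  even : ∀ u : ℂ, |u.re| ≤ 3 / 2 → G (-u) = G u
  map_zero : G 0 = 1

/-- The integrand `y^{-u} γ(u) G(u) / u` at the point `u = 3/2 + it`. -/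
noncomputable def rankinSelbergVIntegrand (n : ℕ) (k l : Fin n → ℕ) (G : ℂ → ℂ) (y t : ℝ) : ℂ :=
  (y : ℂ) ^ (-((3 : ℂ) / 2 + t * Complex.I)) *
    (rankinSelbergGamma n k l ((3 : ℂ) / 2 + t * Complex.I) * G ((3 : ℂ) / 2 + t * Complex.I) /
      ((3 : ℂ) / 2 + t * Complex.I))

/-- The cut-off function `V(y) = (1/(2πi)) ∫_{Re u = 3/2} y^{-u} γ(u) G(u) du/u`, with the line
parametrized by `u = 3/2 + it`, `du = i dt`. -/
noncomputable def rankinSelbergV (n : ℕ) (k l : Fin n → ℕ) (G : ℂ → ℂ) (y : ℝ) : ℂ :=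
  (1 / (2 * Real.pi) : ℂ) * ∫ t : ℝ, rankinSelbergVIntegrand n k l G y t


/-!
`V` is an inverse Mellin transform, and `y ^ a * V⁽ᵃ⁾` is the inverse Mellin transform of the same
function multiplied by `(-u)(-u - 1)⋯(-u - a + 1)`. Moving the contour from `Re u = 3/2` to
`Re u = -α`, which the rapid decay of `γ` on vertical strips permits, crosses only the pole at
`u = 0`. Its residue is `γ(0) G(0) = 1` if `a = 0`, and for `a > 0` the polynomial vanishes there.
On the new line `|y ^ (-u)| = y ^ α`, and Wendel's inequality `Γ(x + s) ≤ x ^ s Γ(x)` gives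
`γ(u) ≪ ∏ⱼ kⱼ ^ (-2α)` with a constant independent of `k`. What is left is the integral of
`(-u)(-u - 1)⋯(-u - a + 1) G(u) / u`, which converges absolutely once `G(u) = O(|u|^{-a-1})`.
-/

open Complex Set Filter Topology MeasureTheory Asymptotics

section Decay

variable {E : Type*} [NormedAddCommGroup E] {f : ℂ → E} {S T : Set ℂ}

/-- Rapid decay of `f` on `S`: `f(u) = O((1 + |u|)⁻ᴺ)` for `u ∈ S` and every `N`. The estimate is
required on all of `S`, so `f` is in particular bounded there. -/
def RapidDecayOn (f : ℂ → E) (S : Set ℂ) : Prop :=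
  ∀ N : ℕ, f =O[𝓟 S] fun u => ((1 + ‖u‖) ^ N)⁻¹

theorem isBigO_one_add_norm_add (c : ℂ) (l : Filter ℂ) :
    (fun u => 1 + ‖u‖) =O[l] fun u => 1 + ‖u + c‖ := by
  refine .of_bound (1 + ‖c‖) (Eventually.of_forall fun u => ?_)
  rw [Real.norm_of_nonneg (by positivity), Real.norm_of_nonneg (by positivity)]
  have h : ‖u‖ ≤ ‖u + c‖ + ‖c‖ := by simpa using norm_sub_le (u + c) c
  nlinarith [mul_nonneg (norm_nonneg c) (norm_nonneg (u + c))]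

theorem isBigO_eval_one_add_norm_pow (p : Polynomial ℂ) (l : Filter ℂ) :
    (fun u => p.eval u) =O[l] fun u => (1 + ‖u‖) ^ p.natDegree := by
  simp_rw [Polynomial.eval_eq_sum_range]
  refine .fun_sum fun i hi => ?_
  have hmonomial : (fun u : ℂ => u ^ i) =O[l] fun u => (1 + ‖u‖) ^ p.natDegree := by
    refine .of_norm_le fun u => ?_
    rw [norm_pow]
    calc ‖u‖ ^ i ≤ (1 + ‖u‖) ^ i := by gcongr; linarith
      _ ≤ (1 + ‖u‖) ^ p.natDegree :=
        pow_le_pow_right₀ (by linarith [norm_nonneg u]) (Finset.mem_range_succ_iff.1 hi)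
  exact hmonomial.const_mul_left _

theorem isBigO_inv_one_add_norm {c : ℝ} (hc : 0 < c) (hS : ∀ u ∈ S, c ≤ ‖u‖) :
    (fun u : ℂ => u⁻¹) =O[𝓟 S] fun u => (1 + ‖u‖)⁻¹ := by
  refine isBigO_principal.2 ⟨1 + c⁻¹, fun u hu => ?_⟩
  have hu0 : 0 < ‖u‖ := hc.trans_le (hS u hu)
  rw [norm_inv, Real.norm_of_nonneg (by positivity), ← div_eq_mul_inv, le_div_iff₀ (by positivity),
    mul_add, mul_one, inv_mul_cancel₀ hu0.ne', add_comm]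
  gcongr
  exact hS u hu

theorem isBigO_inv_vertical {σ : ℝ} (hσ : σ ≠ 0) :
    (fun u : ℂ => u⁻¹) =O[𝓟 (re ⁻¹' {σ})] fun u => (1 + ‖u‖)⁻¹ :=
  isBigO_inv_one_add_norm (abs_pos.2 hσ) fun u hu => by
    simpa [mem_singleton_iff.1 hu] using abs_re_le_norm u

theorem isBigO_inv_one_add_norm_pow_of_mul_norm_le {N : ℕ} {C : ℝ}
    (hf : ∀ u ∈ S, (1 + ‖u‖) ^ N * ‖f u‖ ≤ C) : f =O[𝓟 S] fun u => ((1 + ‖u‖) ^ N)⁻¹ :=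
  isBigO_principal.2 ⟨C, fun u hu => by
    rw [Real.norm_of_nonneg (by positivity), ← div_eq_mul_inv, le_div_iff₀' (by positivity)]
    exact hf u hu⟩

namespace RapidDecayOn

theorem mono (hf : RapidDecayOn f T) (hST : S ⊆ T) : RapidDecayOn f S :=
  fun N => (hf N).mono (principal_mono.2 hST)

theorem smul_of_isBigO [NormedSpace ℂ E] (hf : RapidDecayOn f S) {g : ℂ → ℂ} {m : ℕ}
    (hg : g =O[𝓟 S] fun u => (1 + ‖u‖) ^ m) : RapidDecayOn (fun u => g u • f u) S := fun N =>
  (hg.smul (hf (m + N))).congr_right fun u => by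
    rw [smul_eq_mul, pow_add, mul_inv, mul_inv_cancel_left₀ (by positivity)]

theorem mul {f g : ℂ → ℂ} (hf : RapidDecayOn f S) (hg : RapidDecayOn g S) :
    RapidDecayOn (f * g) S :=
  hg.smul_of_isBigO (m := 0) (by simpa using hf 0)

theorem prod {ι : Type*} {s : Finset ι} (hs : s.Nonempty) {f : ι → ℂ → ℂ}
    (hf : ∀ i ∈ s, RapidDecayOn (f i) S) : RapidDecayOn (∏ i ∈ s, f i) S :=
  Finset.prod_induction_nonempty f (RapidDecayOn · S) (fun _ _ => mul) hs hf

theorem comp_add_const (hf : RapidDecayOn f S) (c : ℂ) :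
    RapidDecayOn (fun u => f (u + c)) ((· + c) ⁻¹' S) := by
  intro N
  have htends : Tendsto (· + c) (𝓟 ((· + c) ⁻¹' S)) (𝓟 S) :=
    tendsto_principal_principal.2 fun _ => id
  exact ((hf N).comp_tendsto htends).trans (((isBigO_one_add_norm_add c _).pow N).inv_rev
    (.of_forall fun u hu => absurd hu (by positivity)))

end RapidDecayOn

theorem verticalIntegrable_of_isBigO {σ : ℝ} (hf : Continuous fun t : ℝ => f (σ + t * I))
    (hO : f =O[𝓟 (re ⁻¹' {σ})] fun u => ((1 + ‖u‖) ^ 2)⁻¹) : VerticalIntegrable f σ := by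
  obtain ⟨C, hC⟩ := isBigO_principal.1 hO
  refine (integrable_inv_one_add_sq.const_mul |C|).mono' hf.aestronglyMeasurable
    (ae_of_all _ fun t => (hC (σ + t * I) (by simp)).trans ?_)
  have him : |t| ≤ ‖(σ + t * I : ℂ)‖ := by simpa using abs_im_le_norm (σ + t * I : ℂ)
  rw [Real.norm_of_nonneg (by positivity)]
  gcongr
  · exact le_abs_self C
  · nlinarith [sq_abs t, abs_nonneg t]

/-- The `L¹` norm of `f` on the vertical line `Re u = σ` for the measure `|du| / 2π`, normalized so
as to bound inverse Mellin transforms. It is meaningful only for `VerticalIntegrable f σ`; otherwise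
the integral has the junk value `0`. -/
noncomputable def verticalL1Norm (f : ℂ → E) (σ : ℝ) : ℝ :=
  (2 * Real.pi)⁻¹ * ∫ t : ℝ, ‖f (σ + t * I)‖

theorem verticalL1Norm_le_mul {F : Type*} [NormedAddCommGroup F] {g : ℂ → F} {σ c : ℝ}
    (hg : VerticalIntegrable g σ) (hfg : ∀ u : ℂ, u.re = σ → ‖f u‖ ≤ c * ‖g u‖) :
    verticalL1Norm f σ ≤ c * verticalL1Norm g σ := by
  rw [verticalL1Norm, verticalL1Norm, mul_left_comm c, ← integral_const_mul c]
  gcongr (2 * Real.pi)⁻¹ * ?_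
  exact integral_mono_of_nonneg (ae_of_all _ fun _ => norm_nonneg _) (hg.norm.const_mul c)
    (ae_of_all _ fun t => hfg _ (by simp))

end Decay

section Gamma

theorem norm_Gamma_le_Gamma_re {s : ℂ} (hs : 0 < s.re) : ‖Gamma s‖ ≤ Real.Gamma s.re := by
  rw [Gamma_eq_integral hs, Real.Gamma_eq_integral hs, GammaIntegral]
  refine (norm_integral_le_integral_norm _).trans_eq ?_
  refine setIntegral_congr_fun measurableSet_Ioi fun x (hx : 0 < x) => ?_
  simp [norm_cpow_eq_rpow_re_of_pos hx, norm_exp]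

theorem norm_pow_mul_norm_Gamma_le {s : ℂ} (hs : 0 < s.re) (N : ℕ) :
    ‖s‖ ^ N * ‖Gamma s‖ ≤ Real.Gamma (s.re + N) := by
  have hshift : ‖s‖ ^ N * ‖Gamma s‖ ≤ ‖Gamma (s + N)‖ := by
    induction N with
    | zero => simp
    | succ N ih =>
      have hre : s.re ≤ (s + N).re := by simp
      have hne : s + N ≠ 0 := fun h => (hs.trans_le hre).ne' (by rw [h, zero_re])
      have hle : ‖s‖ ≤ ‖s + N‖ := by
        rw [norm_def, norm_def, normSq_apply, normSq_apply, show (s + N).im = s.im by simp]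
        have hN : 0 ≤ (s + N).re := hs.le.trans hre
        gcongr
      rw [Nat.cast_succ, ← add_assoc, Gamma_add_one _ hne, norm_mul, pow_succ', mul_assoc]
      gcongr
  calc ‖s‖ ^ N * ‖Gamma s‖ ≤ ‖Gamma (s + N)‖ := hshift
    _ ≤ Real.Gamma (s + N).re := norm_Gamma_le_Gamma_re (by rw [add_re, natCast_re]; positivity)
    _ = Real.Gamma (s.re + N) := by simp

theorem rapidDecayOn_Gamma {a b : ℝ} (ha : 0 < a) : RapidDecayOn Gamma (re ⁻¹' Icc a b) := by
  intro N
  have hcont : ContinuousOn (fun x : ℝ => Real.Gamma (x + N)) (Icc a b) := fun x hx =>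
    ((Real.differentiableOn_Gamma_Ioi.continuousOn.continuousAt (Ioi_mem_nhds
      (add_pos_of_pos_of_nonneg (ha.trans_le hx.1) N.cast_nonneg))).comp (f := (· + (N : ℝ)))
      (by fun_prop)).continuousWithinAt
  obtain ⟨C, hC⟩ := isCompact_Icc.exists_bound_of_continuousOn hcont
  refine isBigO_inv_one_add_norm_pow_of_mul_norm_le (C := (1 + a⁻¹) ^ N * C) fun s hs => ?_
  have hspos : 0 < s.re := ha.trans_le hs.1
  have hle : 1 + ‖s‖ ≤ (1 + a⁻¹) * ‖s‖ := by
    have : 1 ≤ a⁻¹ * ‖s‖ := (one_le_inv_mul₀ ha).2 (hs.1.trans (re_le_norm s))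
    linarith
  calc (1 + ‖s‖) ^ N * ‖Gamma s‖ ≤ ((1 + a⁻¹) * ‖s‖) ^ N * ‖Gamma s‖ := by gcongr
    _ = (1 + a⁻¹) ^ N * (‖s‖ ^ N * ‖Gamma s‖) := by rw [mul_pow, mul_assoc]
    _ ≤ (1 + a⁻¹) ^ N * C := by
      gcongr
      exact (norm_pow_mul_norm_Gamma_le hspos N).trans ((le_abs_self _).trans (hC s.re hs))

/-- Wendel's inequality, a consequence of the log-convexity of `Γ`. -/
theorem Gamma_add_le_rpow_mul_Gamma {x s : ℝ} (hx : 0 < x) (hs0 : 0 ≤ s) (hs1 : s ≤ 1) :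
    Real.Gamma (x + s) ≤ x ^ s * Real.Gamma x := by
  have hΓ := Real.Gamma_pos_of_pos hx
  have hconv := Real.convexOn_log_Gamma.2 hx (mem_Ioi.2 (by positivity : 0 < x + 1))
    (sub_nonneg.2 hs1) hs0 (sub_add_cancel 1 s)
  simp only [smul_eq_mul, Function.comp_apply] at hconv
  rw [show (1 - s) * x + s * (x + 1) = x + s by ring, Real.Gamma_add_one hx.ne',
    Real.log_mul hx.ne' hΓ.ne'] at hconv
  rw [← Real.log_le_log_iff (Real.Gamma_pos_of_pos (by positivity)) (by positivity),
    Real.log_mul (by positivity) hΓ.ne', Real.log_rpow hx]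
  linarith

/-- The ratio `Γ(u + x) / Γ(x)`, i.e. the Pochhammer symbol `(x)_u` with complex index `u`. -/
noncomputable def gammaRatio (x : ℝ) (u : ℂ) : ℂ := Gamma (u + x) / Gamma x

theorem gammaRatio_zero {x : ℝ} (hx : 0 < x) : gammaRatio x 0 = 1 := by
  rw [gammaRatio, zero_add, div_self (Gamma_ne_zero_of_re_pos (by simpa using hx))]

theorem differentiableAt_gammaRatio {x : ℝ} {u : ℂ} (hu : 0 < u.re + x) :
    DifferentiableAt ℂ (gammaRatio x) u := by
  have hΓ : DifferentiableAt ℂ Gamma (u + x) := differentiableAt_Gamma _ fun m hm => by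
    have hre : u.re + x = -m := by simpa using congrArg re hm
    linarith [m.cast_nonneg (α := ℝ)]
  exact (hΓ.comp u (by fun_prop : DifferentiableAt ℂ (· + (x : ℂ)) u)).div_const _

theorem rapidDecayOn_gammaRatio {x a b : ℝ} (ha : 0 < a + x) :
    RapidDecayOn (gammaRatio x) (re ⁻¹' Icc a b) := by
  have hΓ : RapidDecayOn (fun u => Gamma (u + x)) (re ⁻¹' Icc a b) :=
    ((rapidDecayOn_Gamma (b := b + x) ha).comp_add_const x).mono fun u hu => by
      simpa using hu
  exact fun N => ((hΓ N).const_mul_left (Gamma x)⁻¹).congr_left fun u => inv_mul_eq_div _ _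

theorem norm_gammaRatio_le {x α : ℝ} (hα0 : 0 ≤ α) (hα1 : α ≤ 1) (hx : α < x) {u : ℂ}
    (hu : u.re = -α) : ‖gammaRatio x u‖ ≤ x / (x - α) * x ^ (-α) := by
  have hx0 : 0 < x := hα0.trans_lt hx
  have hxα : 0 < x - α := sub_pos.2 hx
  have hre : (u + x).re = x - α := by simp [hu, sub_eq_neg_add]
  have hΓ := Real.Gamma_pos_of_pos hx0
  rw [gammaRatio, Gamma_ofReal, norm_div, norm_real, Real.norm_of_nonneg hΓ.le, div_le_iff₀ hΓ]
  calc ‖Gamma (u + x)‖ ≤ Real.Gamma (x - α) := hre ▸ norm_Gamma_le_Gamma_re (hre ▸ hxα)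
    _ = Real.Gamma (x + (1 - α)) / (x - α) := by
      rw [show x + (1 - α) = x - α + 1 by ring, Real.Gamma_add_one hxα.ne',
        mul_div_cancel_left₀ _ hxα.ne']
    _ ≤ x ^ (1 - α) * Real.Gamma x / (x - α) := by
      gcongr
      exact Gamma_add_le_rpow_mul_Gamma hx0 (by linarith) (by linarith)
    _ = x / (x - α) * x ^ (-α) * Real.Gamma x := by
      rw [sub_eq_add_neg, Real.rpow_add hx0, Real.rpow_one]
      ring

end Gamma

section MellinInv

open scoped FourierTransform

variable {E : Type*} [NormedAddCommGroup E] [NormedSpace ℂ E] {f g : ℂ → E} {σ x : ℝ}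

theorem norm_ofReal_cpow_neg_vertical (hx : 0 < x) (σ t : ℝ) :
    ‖(x : ℂ) ^ (-(σ + t * I) : ℂ)‖ = x ^ (-σ) := by
  rw [norm_cpow_eq_rpow_re_of_pos hx]
  simp

theorem integrable_ofReal_cpow_smul (hx : 0 < x) (hf : VerticalIntegrable f σ) :
    Integrable fun t : ℝ => (x : ℂ) ^ (-(σ + t * I) : ℂ) • f (σ + t * I) := by
  have hcont : Continuous fun t : ℝ => (x : ℂ) ^ (-(σ + t * I) : ℂ) :=
    .const_cpow (by fun_prop) (.inl (ofReal_ne_zero.2 hx.ne'))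
  exact Integrable.bdd_smul hf _ hcont.aestronglyMeasurable
    (ae_of_all _ fun t => (norm_ofReal_cpow_neg_vertical hx σ t).le)

theorem norm_mellinInv_le (hx : 0 < x) : ‖mellinInv σ f x‖ ≤ x ^ (-σ) * verticalL1Norm f σ := by
  rw [mellinInv, norm_smul, one_div, Real.norm_of_nonneg (by positivity), verticalL1Norm,
    mul_left_comm, ← integral_const_mul]
  gcongr
  refine (norm_integral_le_integral_norm _).trans_eq ?_
  simp_rw [norm_smul, norm_ofReal_cpow_neg_vertical hx]

theorem mellinInv_sub (hx : 0 < x) (hf : VerticalIntegrable f σ) (hg : VerticalIntegrable g σ) :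
    mellinInv σ (f - g) x = mellinInv σ f x - mellinInv σ g x := by
  simp only [mellinInv, Pi.sub_apply, smul_sub]
  rw [integral_sub (integrable_ofReal_cpow_smul hx hf) (integrable_ofReal_cpow_smul hx hg),
    smul_sub]

theorem mellinInv_const_smul (c : ℂ) : mellinInv σ (c • f) x = c • mellinInv σ f x := by
  simp only [mellinInv, Pi.smul_apply, smul_comm _ c, integral_smul]

theorem mellinInv_eq_rpow_smul_fourier (hx : 0 < x) (f : ℂ → E) :
    mellinInv σ f x =
      x ^ (-σ) • 𝓕 (fun t : ℝ => f (σ + (2 * Real.pi * t : ℝ) * I)) (Real.log x) := by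
  simp only [mellinInv_eq_fourierInv σ f hx, Real.fourierInv_eq_fourier_neg, neg_neg,
    ← ofReal_neg, ← ofReal_cpow hx.le, coe_smul, ofReal_mul, ofReal_ofNat]

theorem hasDerivAt_mellinInv (hx : 0 < x) (hf : VerticalIntegrable f σ)
    (huf : VerticalIntegrable (fun u => u • f u) σ) :
    HasDerivAt (mellinInv σ f) (-(x : ℂ)⁻¹ • mellinInv σ (fun u => u • f u) x) x := by
  have hσf : VerticalIntegrable ((σ : ℂ) • f) σ := Integrable.smul _ hf
  set line : ℝ → ℂ := fun t => σ + (2 * Real.pi * t : ℝ) * I with hline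
  set φ : ℝ → E := fun t => f (line t)
  have hφ : Integrable φ := Integrable.comp_mul_left' hf Real.two_pi_pos.ne'
  have hmul (t : ℝ) : (-2 * Real.pi * I * t) • φ t = ((σ : ℂ) • f - fun u => u • f u) (line t) := by
    simp only [φ, hline, Pi.sub_apply, Pi.smul_apply, ← sub_smul]
    push_cast
    ring_nf
  have hσuf : VerticalIntegrable ((σ : ℂ) • f - fun u => u • f u) σ := hσf.sub huf
  have hmulφ : Integrable fun t : ℝ => (-2 * Real.pi * I * t) • φ t := by
    simp only [hmul]
    exact Integrable.comp_mul_left' hσuf Real.two_pi_pos.ne'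
  have hφ' : Integrable fun t : ℝ => t • φ t := by
    refine (hmulφ.smul (-2 * Real.pi * I)⁻¹).congr (ae_of_all _ fun t => ?_)
    rw [Pi.smul_apply, smul_smul, inv_mul_cancel_left₀ (by simp [Real.pi_ne_zero]), coe_smul]
  have hderiv := ((Real.hasDerivAt_rpow_const (p := -σ) (.inl hx.ne')).smul
    ((Real.hasDerivAt_fourier hφ hφ' _).scomp x (Real.hasDerivAt_log hx.ne'))).congr_of_eventuallyEq
    ((lt_mem_nhds hx).mono fun y hy => mellinInv_eq_rpow_smul_fourier hy f)
  refine hderiv.congr_deriv ?_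
  simp only [hmul]
  rw [smul_comm, ← mellinInv_eq_rpow_smul_fourier hx, mellinInv_sub hx hσf huf,
    mellinInv_const_smul, mellinInv_eq_rpow_smul_fourier hx f, Real.rpow_sub_one hx.ne',
    Function.comp_apply]
  module

end MellinInv

section IteratedDeriv

variable {E : Type*} [NormedAddCommGroup E]

theorem iteratedDeriv_eq_of_hasDerivAt {𝕜 : Type*} [NontriviallyNormedField 𝕜] [NormedSpace 𝕜 E]
    {s : Set 𝕜} (hs : IsOpen s) {f : ℕ → 𝕜 → E}
    (hf : ∀ m, ∀ x ∈ s, HasDerivAt (f m) (f (m + 1) x) x) (m : ℕ) :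
    EqOn (iteratedDeriv m (f 0)) (f m) s := by
  induction m with
  | zero => exact fun x _ => by rw [iteratedDeriv_zero]
  | succ m ih =>
    intro x hx
    rw [iteratedDeriv_succ, (ih.eventuallyEq_of_mem (hs.mem_nhds hx)).deriv_eq]
    exact (hf m x hx).deriv

theorem contDiffOn_of_hasDerivAt [NormedSpace ℝ E] {s : Set ℝ} (hs : IsOpen s) {f : ℕ → ℝ → E}
    (hf : ∀ m, ∀ x ∈ s, HasDerivAt (f m) (f (m + 1) x) x) :
    ContDiffOn ℝ ((⊤ : ℕ∞) : WithTop ℕ∞) (f 0) s := by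
  refine contDiffOn_of_differentiableOn_deriv fun m _ => ?_
  have hdiff : DifferentiableOn ℝ (f m) s := fun x hx =>
    (hf m x hx).differentiableAt.differentiableWithinAt
  exact hdiff.congr fun x hx => by
    rw [iteratedDerivWithin_of_isOpen hs hx, iteratedDeriv_eq_of_hasDerivAt hs hf m hx]

variable [NormedSpace ℂ E] {f : ℂ → E} {σ : ℝ}

theorem hasDerivAt_zpow_smul_mellinInv_descPochhammer
    (hf : ∀ p : Polynomial ℂ, VerticalIntegrable (fun u => p.eval u • f u) σ) (m : ℕ) {x : ℝ}
    (hx : 0 < x) :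
    HasDerivAt (fun y : ℝ => (y : ℂ) ^ (-m : ℤ) •
        mellinInv σ (fun u => (descPochhammer ℂ m).eval (-u) • f u) y)
      ((x : ℂ) ^ (-(m + 1 : ℕ) : ℤ) •
        mellinInv σ (fun u => (descPochhammer ℂ (m + 1)).eval (-u) • f u) x) x := by
  have hx0 : (x : ℂ) ≠ 0 := ofReal_ne_zero.2 hx.ne'
  set g : ℂ → E := fun u => (descPochhammer ℂ m).eval (-u) • f u
  have hg : VerticalIntegrable g σ := by
    simpa [g] using hf ((descPochhammer ℂ m).comp (-Polynomial.X))
  have hug : VerticalIntegrable (fun u => u • g u) σ :=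
    (hf (Polynomial.X * (descPochhammer ℂ m).comp (-Polynomial.X))).congr
      (ae_of_all _ fun t => by simp [g, mul_smul])
  have hneg : VerticalIntegrable ((-1 : ℂ) • fun u => u • g u) σ := Integrable.smul _ hug
  have hmg : VerticalIntegrable ((m : ℂ) • g) σ := Integrable.smul _ hg
  have hrec : (fun u => (descPochhammer ℂ (m + 1)).eval (-u) • f u) =
      (-1 : ℂ) • (fun u => u • g u) - (m : ℂ) • g := by
    funext u
    simp only [g, descPochhammer_succ_eval, Pi.sub_apply, Pi.smul_apply]
    module
  have hpow : HasDerivAt (fun y : ℝ => (y : ℂ) ^ (-m : ℤ))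
      (((-m : ℤ) : ℂ) * (x : ℂ) ^ (-m - 1 : ℤ)) x :=
    (hasDerivAt_zpow (-m : ℤ) (x : ℂ) (.inl hx0)).comp_ofReal
  refine (hpow.smul (hasDerivAt_mellinInv hx hg hug)).congr_deriv ?_
  rw [hrec, mellinInv_sub hx hneg hmg, mellinInv_const_smul, mellinInv_const_smul,
    zpow_sub_one₀ hx0, show (-(m + 1 : ℕ) : ℤ) = -m - 1 by push_cast; ring,
    zpow_sub_one₀ hx0]
  push_cast
  module

theorem contDiffOn_mellinInv
    (hf : ∀ p : Polynomial ℂ, VerticalIntegrable (fun u => p.eval u • f u) σ) :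
    ContDiffOn ℝ ((⊤ : ℕ∞) : WithTop ℕ∞) (mellinInv σ f) (Ioi 0) := by
  simpa using contDiffOn_of_hasDerivAt isOpen_Ioi fun m x hx =>
    hasDerivAt_zpow_smul_mellinInv_descPochhammer hf m hx

theorem pow_smul_iteratedDeriv_mellinInv
    (hf : ∀ p : Polynomial ℂ, VerticalIntegrable (fun u => p.eval u • f u) σ) (m : ℕ) {x : ℝ}
    (hx : 0 < x) :
    (x : ℂ) ^ m • iteratedDeriv m (mellinInv σ f) x =
      mellinInv σ (fun u => (descPochhammer ℂ m).eval (-u) • f u) x := by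
  have hiter := iteratedDeriv_eq_of_hasDerivAt isOpen_Ioi (fun m x hx =>
    hasDerivAt_zpow_smul_mellinInv_descPochhammer hf m hx) m hx
  simp only [CharP.cast_eq_zero, neg_zero, zpow_zero, one_smul, descPochhammer_zero,
    Polynomial.eval_one] at hiter
  rw [hiter, zpow_neg, zpow_natCast,
    smul_inv_smul₀ (pow_ne_zero _ (ofReal_ne_zero.2 hx.ne'))]

end IteratedDeriv

section ContourShift

variable {E : Type*} [NormedAddCommGroup E] [NormedSpace ℂ E] {h : ℂ → E} {σ₁ σ₂ c : ℝ}

theorem add_mul_I_ne_zero (hc : c ≠ 0) (t : ℝ) : (c + t * I : ℂ) ≠ 0 := fun h =>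
  hc (by simpa using congrArg re h)

theorem continuous_inv_vertical (hc : c ≠ 0) : Continuous fun t : ℝ => (c + t * I : ℂ)⁻¹ :=
  .inv₀ (by fun_prop) (add_mul_I_ne_zero hc)

theorem intervalIntegral_inv_vertical (hc : c ≠ 0) (T : ℝ) :
    ∫ t in (-T)..T, (c + t * I : ℂ)⁻¹ = (2 * Real.arctan (T / c) : ℝ) := by
  have hsymm : ∫ t in (-T)..T, (c - t * I : ℂ)⁻¹ = ∫ t in (-T)..T, (c + t * I : ℂ)⁻¹ := by
    simpa [sub_eq_add_neg] using
      intervalIntegral.integral_comp_neg (a := -T) (b := T) fun t : ℝ => (c + t * I : ℂ)⁻¹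
  have hcont : Continuous fun t : ℝ => (c - t * I : ℂ)⁻¹ := by
    simpa [Function.comp_def, sub_eq_add_neg] using
      (continuous_inv_vertical hc).comp continuous_neg
  have hsum (t : ℝ) : (c + t * I : ℂ)⁻¹ + (c - t * I : ℂ)⁻¹ =
      ((2 * (c⁻¹ * (1 + (t / c) ^ 2)⁻¹) : ℝ) : ℂ) := by
    have hnormSq : (c ^ 2 + t ^ 2 : ℂ) ≠ 0 := by
      exact_mod_cast (by positivity : c ^ 2 + t ^ 2 ≠ 0)
    have hfactor : (c + t * I : ℂ) * (c - t * I) = c ^ 2 + t ^ 2 := by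
      linear_combination (-(t : ℂ) ^ 2) * I_sq
    have hc0 : (c : ℂ) ≠ 0 := ofReal_ne_zero.2 hc
    rw [inv_add_inv (left_ne_zero_of_mul (hfactor ▸ hnormSq))
      (right_ne_zero_of_mul (hfactor ▸ hnormSq)), hfactor]
    push_cast
    field_simp
    ring
  have hdouble : 2 * ∫ t in (-T)..T, (c + t * I : ℂ)⁻¹ = (2 * (2 * Real.arctan (T / c)) : ℝ) := by
    rw [two_mul]
    nth_rw 2 [← hsymm]
    rw [← intervalIntegral.integral_add ((continuous_inv_vertical hc).intervalIntegrable _ _)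
      (hcont.intervalIntegrable _ _)]
    simp_rw [hsum]
    rw [intervalIntegral.integral_ofReal, intervalIntegral.integral_const_mul,
      intervalIntegral.integral_const_mul,
      intervalIntegral.inv_mul_integral_comp_div (f := fun t => (1 + t ^ 2)⁻¹),
      integral_inv_one_add_sq, neg_div, Real.arctan_neg, sub_neg_eq_add, ← two_mul]
  simpa using hdouble

theorem tendsto_intervalIntegral_inv_vertical (hc : c ≠ 0) :
    Tendsto (fun T : ℝ => ∫ t in (-T)..T, (c + t * I : ℂ)⁻¹) atTop
      (𝓝 (Real.sign c * Real.pi : ℝ)) := by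
  have harctan : Tendsto (fun T : ℝ => Real.arctan (T / c)) atTop
      (𝓝 (Real.sign c * (Real.pi / 2))) := by
    rcases hc.lt_or_gt with hneg | hpos
    · simpa [Function.comp_def, Real.sign_of_neg hneg] using
        (Real.tendsto_arctan_atBot.mono_right nhdsWithin_le_nhds).comp
          (tendsto_id.atTop_div_const_of_neg hneg)
    · simpa [Function.comp_def, Real.sign_of_pos hpos] using
        (Real.tendsto_arctan_atTop.mono_right nhdsWithin_le_nhds).comp
          (tendsto_id.atTop_div_const hpos)
  simp_rw [intervalIntegral_inv_vertical hc]
  refine (continuous_ofReal.tendsto _).comp ?_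
  convert harctan.const_mul 2 using 2
  ring

theorem tendsto_intervalIntegral_horizontal {g : ℂ → E} {C : ℝ}
    (hg : ∀ u ∈ re ⁻¹' uIcc σ₁ σ₂, ‖u • g u‖ ≤ C) :
    Tendsto (fun T : ℝ => ∫ x in σ₁..σ₂, g (x + T * I)) (cocompact ℝ) (𝓝 0) := by
  have hlim : Tendsto (fun T : ℝ => C / ‖T‖ * |σ₂ - σ₁|) (cocompact ℝ) (𝓝 0) := by
    simpa using ((tendsto_norm_cocompact_atTop (E := ℝ)).const_div_atTop C).mul_const |σ₂ - σ₁|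
  refine squeeze_zero_norm' ?_ hlim
  filter_upwards [(tendsto_norm_cocompact_atTop (E := ℝ)).eventually_gt_atTop 0] with T hT
  refine intervalIntegral.norm_integral_le_of_norm_le_const fun x hx => ?_
  have him : ‖T‖ ≤ ‖(x + T * I : ℂ)‖ := by simpa using abs_im_le_norm (x + T * I : ℂ)
  rw [le_div_iff₀' hT]
  calc ‖T‖ * ‖g (x + T * I)‖ ≤ ‖(x + T * I : ℂ)‖ * ‖g (x + T * I)‖ := by gcongr
    _ = ‖(x + T * I : ℂ) • g (x + T * I)‖ := (norm_smul _ _).symm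
    _ ≤ C := hg _ (by simpa using uIoc_subset_uIcc hx)

variable [CompleteSpace E]

theorem tendsto_intervalIntegral_dslope_vertical (hc : c ≠ 0)
    (hi : VerticalIntegrable (fun u => u⁻¹ • h u) c) :
    Tendsto (fun T : ℝ => ∫ t in (-T)..T, dslope h 0 (c + t * I)) atTop
      (𝓝 ((∫ t : ℝ, (c + t * I : ℂ)⁻¹ • h (c + t * I)) -
        ((Real.sign c * Real.pi : ℝ) : ℂ) • h 0)) := by
  have hdslope (t : ℝ) : dslope h 0 (c + t * I) =
      (c + t * I : ℂ)⁻¹ • h (c + t * I) - (c + t * I : ℂ)⁻¹ • h 0 := by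
    rw [dslope_of_ne _ (add_mul_I_ne_zero hc t), slope_def_module, sub_zero, smul_sub]
  have hpole (T : ℝ) :
      IntervalIntegrable (fun t : ℝ => (c + t * I : ℂ)⁻¹ • h 0) volume (-T) T :=
    ((continuous_inv_vertical hc).smul continuous_const).intervalIntegrable _ _
  refine ((intervalIntegral_tendsto_integral hi tendsto_neg_atTop_atBot tendsto_id).sub
    ((tendsto_intervalIntegral_inv_vertical hc).smul_const (h 0))).congr fun T => ?_
  simp_rw [hdslope]
  rw [← intervalIntegral.integral_smul_const]
  exact (intervalIntegral.integral_sub hi.intervalIntegrable (hpole T)).symm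

theorem integral_vertical_sub_integral_vertical (h₁ : σ₁ < 0) (h₂ : 0 < σ₂)
    (hd : DifferentiableOn ℂ h (re ⁻¹' Icc σ₁ σ₂))
    (hb : ∃ C, ∀ u ∈ re ⁻¹' Icc σ₁ σ₂, ‖h u‖ ≤ C)
    (hi₁ : VerticalIntegrable (fun u => u⁻¹ • h u) σ₁)
    (hi₂ : VerticalIntegrable (fun u => u⁻¹ • h u) σ₂) :
    (∫ t : ℝ, (σ₂ + t * I : ℂ)⁻¹ • h (σ₂ + t * I)) -
      ∫ t : ℝ, (σ₁ + t * I : ℂ)⁻¹ • h (σ₁ + t * I) = (2 * Real.pi : ℂ) • h 0 := by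
  have hσ : uIcc σ₁ σ₂ = Icc σ₁ σ₂ := uIcc_of_le (h₁.trans h₂).le
  rw [← hσ] at hd hb
  obtain ⟨C, hC⟩ := hb
  have hmem : re ⁻¹' uIcc σ₁ σ₂ ∈ 𝓝 (0 : ℂ) :=
    continuous_re.continuousAt.preimage_mem_nhds (hσ ▸ Icc_mem_nhds h₁ h₂)
  have hbound : ∀ u ∈ re ⁻¹' uIcc σ₁ σ₂, ‖u • dslope h 0 u‖ ≤ C + C := fun u hu => by
    have hu_smul : u • dslope h 0 u = h u - h 0 := by simpa using sub_smul_dslope h 0 u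
    exact hu_smul ▸ (norm_sub_le _ _).trans (add_le_add (hC u hu) (hC 0 (mem_of_mem_nhds hmem)))
  have hrect (T : ℝ) :
      (∫ x in σ₁..σ₂, dslope h 0 (x + (-T : ℝ) * I)) - (∫ x in σ₁..σ₂, dslope h 0 (x + T * I)) +
        I • (∫ t in (-T)..T, dslope h 0 (σ₂ + t * I)) -
        I • (∫ t in (-T)..T, dslope h 0 (σ₁ + t * I)) = 0 := by
    simpa using integral_boundary_rect_eq_zero_of_differentiableOn (dslope h 0) ⟨σ₁, -T⟩ ⟨σ₂, T⟩
      (((differentiableOn_dslope hmem).2 hd).mono inter_subset_left)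
  have hhor := tendsto_intervalIntegral_horizontal hbound
  have hlim := (((hhor.comp (tendsto_neg_atTop_atBot.mono_right atBot_le_cocompact)).sub
    (hhor.mono_left atTop_le_cocompact)).add
      ((tendsto_intervalIntegral_dslope_vertical h₂.ne' hi₂).const_smul I)).sub
      ((tendsto_intervalIntegral_dslope_vertical h₁.ne hi₁).const_smul I)
  have hzero := tendsto_nhds_unique hlim (tendsto_const_nhds.congr fun T => (hrect T).symm)
  rw [Real.sign_of_pos h₂, Real.sign_of_neg h₁] at hzero
  refine sub_eq_zero.1 ((smul_eq_zero_iff_right I_ne_zero).1 ?_)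
  rw [← hzero]
  push_cast
  module

theorem mellinInv_inv_smul_sub_mellinInv_inv_smul (h₁ : σ₁ < 0) (h₂ : 0 < σ₂)
    (hd : DifferentiableOn ℂ h (re ⁻¹' Icc σ₁ σ₂))
    (hb : ∃ C, ∀ u ∈ re ⁻¹' Icc σ₁ σ₂, ‖h u‖ ≤ C)
    (hi₁ : VerticalIntegrable (fun u => u⁻¹ • h u) σ₁)
    (hi₂ : VerticalIntegrable (fun u => u⁻¹ • h u) σ₂) {x : ℝ} (hx : 0 < x) :
    mellinInv σ₂ (fun u => u⁻¹ • h u) x - mellinInv σ₁ (fun u => u⁻¹ • h u) x = h 0 := by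
  have hx0 : (x : ℂ) ≠ 0 := ofReal_ne_zero.2 hx.ne'
  obtain ⟨C, hC⟩ := hb
  obtain ⟨B, hB⟩ := isCompact_Icc.exists_bound_of_continuousOn (s := Icc σ₁ σ₂)
    ((Real.continuous_const_rpow hx.ne').comp continuous_neg).continuousOn
  have hcpow : Differentiable ℂ fun u : ℂ => (x : ℂ) ^ (-u) :=
    differentiable_neg.const_cpow (.inl hx0)
  have hbound : ∀ u ∈ re ⁻¹' Icc σ₁ σ₂, ‖(x : ℂ) ^ (-u) • h u‖ ≤ B * C := fun u hu => by
    have hxu : ‖(x : ℂ) ^ (-u)‖ ≤ B := by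
      rw [norm_cpow_eq_rpow_re_of_pos hx, neg_re]
      exact (le_abs_self _).trans (hB u.re hu)
    rw [norm_smul]
    exact mul_le_mul hxu (hC u hu) (norm_nonneg _) ((norm_nonneg _).trans hxu)
  have hint {σ : ℝ} (hi : VerticalIntegrable (fun u => u⁻¹ • h u) σ) :
      VerticalIntegrable (fun u => u⁻¹ • (x : ℂ) ^ (-u) • h u) σ :=
    (integrable_ofReal_cpow_smul hx hi).congr (ae_of_all _ fun t => smul_comm _ _ _)
  have hshift := integral_vertical_sub_integral_vertical (h := fun u => (x : ℂ) ^ (-u) • h u)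
    h₁ h₂ (hcpow.differentiableOn.smul hd) ⟨B * C, hbound⟩ (hint hi₁) (hint hi₂)
  have hcomm (u : ℂ) : (x : ℂ) ^ (-u) • u⁻¹ • h u = u⁻¹ • (x : ℂ) ^ (-u) • h u := smul_comm _ _ _
  simp only [mellinInv, hcomm, ← smul_sub]
  rw [hshift, neg_zero, cpow_zero, one_smul, ← coe_smul, smul_smul]
  push_cast
  rw [one_div_mul_cancel (by simp [Real.pi_ne_zero]), one_smul]

end ContourShift

section SimplePole

variable {E : Type*} [NormedAddCommGroup E] [NormedSpace ℂ E] {F : ℂ → E}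

theorem RapidDecayOn.verticalIntegrable_eval_smul_inv_smul {σ : ℝ} (hσ : σ ≠ 0)
    (hF : RapidDecayOn F (re ⁻¹' {σ})) (hcont : ContinuousOn F (re ⁻¹' {σ})) (p : Polynomial ℂ) :
    VerticalIntegrable (fun u => p.eval u • u⁻¹ • F u) σ := by
  have hinv : (fun u : ℂ => u⁻¹) =O[𝓟 (re ⁻¹' {σ})] fun u => (1 + ‖u‖) ^ 0 := by
    refine (isBigO_inv_vertical hσ).trans (.of_norm_le fun u => ?_)
    rw [Real.norm_of_nonneg (by positivity), pow_zero]
    exact inv_le_one_of_one_le₀ (le_add_of_nonneg_right (norm_nonneg u))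
  have hFline : Continuous fun t : ℝ => F (σ + t * I) :=
    hcont.comp_continuous (by fun_prop) fun t => by simp
  refine verticalIntegrable_of_isBigO ?_
    ((hF.smul_of_isBigO hinv).smul_of_isBigO (isBigO_eval_one_add_norm_pow p _) 2)
  exact (p.continuous.comp (by fun_prop)).smul ((continuous_inv_vertical hσ).smul hFline)

theorem isBigO_descPochhammer_eval_neg (m : ℕ) (l : Filter ℂ) :
    (fun u => (descPochhammer ℂ m).eval (-u)) =O[l] fun u => (1 + ‖u‖) ^ m := by
  simpa [Polynomial.natDegree_comp] using
    isBigO_eval_one_add_norm_pow ((descPochhammer ℂ m).comp (-Polynomial.X)) l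

theorem verticalIntegrable_descPochhammer_eval_neg_smul_inv_smul {σ : ℝ} (hσ : σ ≠ 0)
    (hcont : ContinuousOn F (re ⁻¹' {σ})) {m : ℕ}
    (hF : F =O[𝓟 (re ⁻¹' {σ})] fun u => ((1 + ‖u‖) ^ (m + 1))⁻¹) :
    VerticalIntegrable (fun u => (descPochhammer ℂ m).eval (-u) • u⁻¹ • F u) σ := by
  have hFline : Continuous fun t : ℝ => F (σ + t * I) :=
    hcont.comp_continuous (by fun_prop) fun t => by simp
  have hpoly : Continuous fun t : ℝ => (descPochhammer ℂ m).eval (-(σ + t * I) : ℂ) :=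
    (descPochhammer ℂ m).continuous.comp (by fun_prop)
  refine verticalIntegrable_of_isBigO
    (hpoly.smul ((continuous_inv_vertical hσ).smul hFline)) ?_
  refine ((isBigO_descPochhammer_eval_neg m _).smul
    ((isBigO_inv_vertical hσ).smul hF)).congr_right fun u => ?_
  have hpos : 1 + ‖u‖ ≠ 0 := by positivity
  simp only [smul_eq_mul, pow_succ]
  field_simp

theorem norm_pow_smul_iteratedDeriv_mellinInv_inv_smul_sub_le [CompleteSpace E] {σ₁ σ₂ : ℝ}
    (h₁ : σ₁ < 0) (h₂ : 0 < σ₂) (hd : DifferentiableOn ℂ F (re ⁻¹' Icc σ₁ σ₂))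
    (hF : RapidDecayOn F (re ⁻¹' Icc σ₁ σ₂)) (m : ℕ) {x : ℝ} (hx : 0 < x) :
    ‖(x : ℂ) ^ m • iteratedDeriv m (mellinInv σ₂ fun u => u⁻¹ • F u) x -
        (if m = 0 then F 0 else 0)‖ ≤
      x ^ (-σ₁) *
        verticalL1Norm (fun u => (descPochhammer ℂ m).eval (-u) • u⁻¹ • F u) σ₁ := by
  set p : Polynomial ℂ := (descPochhammer ℂ m).comp (-Polynomial.X)
  have hp (u : ℂ) : (descPochhammer ℂ m).eval (-u) = p.eval u := by simp [p]
  have hint {σ : ℝ} (hσ : σ ∈ Icc σ₁ σ₂) (hσ0 : σ ≠ 0) (q : Polynomial ℂ) :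
      VerticalIntegrable (fun u => q.eval u • u⁻¹ • F u) σ :=
    have hline : re ⁻¹' {σ} ⊆ re ⁻¹' Icc σ₁ σ₂ := preimage_mono (singleton_subset_iff.2 hσ)
    (hF.mono hline).verticalIntegrable_eval_smul_inv_smul hσ0 (hd.continuousOn.mono hline) q
  have hint₁ := hint (left_mem_Icc.2 (h₁.trans h₂).le) h₁.ne
  have hint₂ := hint (right_mem_Icc.2 (h₁.trans h₂).le) h₂.ne'
  have hbound := isBigO_principal.1 (hF.smul_of_isBigO (isBigO_eval_one_add_norm_pow p _) 0)
  simp only [pow_zero, inv_one, norm_one, mul_one] at hbound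
  have hcomm (u : ℂ) : u⁻¹ • p.eval u • F u = p.eval u • u⁻¹ • F u := smul_comm _ _ _
  have hshift := mellinInv_inv_smul_sub_mellinInv_inv_smul (h := fun u => p.eval u • F u)
    h₁ h₂ (p.differentiable.differentiableOn.smul hd) hbound
    (by simpa only [hcomm] using hint₁ p) (by simpa only [hcomm] using hint₂ p) hx
  have hres : p.eval 0 • F 0 = if m = 0 then F 0 else 0 := by
    simp [← hp, descPochhammer_eval_zero]
  simp only [hcomm, hres] at hshift
  rw [pow_smul_iteratedDeriv_mellinInv hint₂ m hx, ← hshift]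
  simp only [hp, sub_sub_cancel]
  exact norm_mellinInv_le hx

end SimplePole

section RankinSelbergGamma

theorem sq_div_four_mul_le_mul {k l : ℝ} (hk : 0 < k) (hl : 1 ≤ l) :
    k ^ 2 / (4 * l) ≤ (1 + |k - l|) / 2 * ((k + l - 1) / 2) := by
  have hfst : k / (2 * l) ≤ (1 + |k - l|) / 2 := by
    rw [div_le_div_iff₀ (by positivity) (by positivity)]
    nlinarith [le_abs_self (k - l), mul_nonneg (sub_nonneg.2 hl) (abs_nonneg (k - l))]
  calc k ^ 2 / (4 * l) = k / (2 * l) * (k / 2) := by field_simp; norm_num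
    _ ≤ (1 + |k - l|) / 2 * ((k + l - 1) / 2) :=
      mul_le_mul hfst (by linarith) (by positivity) (by positivity)

theorem half_le_one_add_abs_sub_div_two (k l : ℝ) : 1 / 2 ≤ (1 + |k - l|) / 2 := by
  linarith [abs_nonneg (k - l)]

theorem norm_gammaRatio_mul_gammaRatio_le {k l α : ℝ} (hk : 1 ≤ k) (hl : 1 ≤ l) (hα0 : 0 ≤ α)
    (hα1 : α < 1 / 2) {u : ℂ} (hu : u.re = -α) :
    ‖gammaRatio ((1 + |k - l|) / 2) u * gammaRatio ((k + l - 1) / 2) u‖ ≤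
      (1 - 2 * α)⁻¹ ^ 2 * (4 * l) ^ α * (k ^ 2) ^ (-α) := by
  have hk0 : 0 < k := one_pos.trans_le hk
  have hc : 0 < 1 - 2 * α := by linarith
  have hratio {x : ℝ} (hx : 1 / 2 ≤ x) : ‖gammaRatio x u‖ ≤ (1 - 2 * α)⁻¹ * x ^ (-α) := by
    refine (norm_gammaRatio_le hα0 (by linarith) (hα1.trans_le hx) hu).trans ?_
    gcongr
    rw [div_le_iff₀ (by linarith), inv_mul_eq_div, le_div_iff₀ hc]
    nlinarith
  have hx₁ := half_le_one_add_abs_sub_div_two k l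
  have hx₂ : 1 / 2 ≤ (k + l - 1) / 2 := by linarith
  rw [norm_mul]
  calc ‖gammaRatio ((1 + |k - l|) / 2) u‖ * ‖gammaRatio ((k + l - 1) / 2) u‖
      ≤ (1 - 2 * α)⁻¹ * ((1 + |k - l|) / 2) ^ (-α) *
          ((1 - 2 * α)⁻¹ * ((k + l - 1) / 2) ^ (-α)) := by
        gcongr
        exacts [hratio hx₁, hratio hx₂]
    _ = (1 - 2 * α)⁻¹ ^ 2 * ((1 + |k - l|) / 2 * ((k + l - 1) / 2)) ^ (-α) := by
        rw [Real.mul_rpow (by linarith) (by linarith)]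
        ring
    _ ≤ (1 - 2 * α)⁻¹ ^ 2 * (k ^ 2 / (4 * l)) ^ (-α) := by
        refine mul_le_mul_of_nonneg_left (Real.rpow_le_rpow_of_nonpos (by positivity)
          (sq_div_four_mul_le_mul hk0 hl) (by linarith)) (by positivity)
    _ = (1 - 2 * α)⁻¹ ^ 2 * (4 * l) ^ α * (k ^ 2) ^ (-α) := by
        rw [Real.div_rpow (by positivity) (by positivity), Real.rpow_neg (x := 4 * l)
          (by positivity), div_inv_eq_mul, mul_comm (_ ^ (-α)), mul_assoc]

variable {n : ℕ} {k l : Fin n → ℕ}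

theorem rankinSelbergGamma_eq_prod (n : ℕ) (k l : Fin n → ℕ) :
    rankinSelbergGamma n k l = ∏ j, gammaRatio ((1 + |(k j : ℝ) - l j|) / 2) *
      gammaRatio ((k j + l j - 1) / 2) := by
  funext u
  rw [Finset.prod_apply]
  refine Finset.prod_congr rfl fun j _ => ?_
  have habs : ((|(k j : ℤ) - l j| : ℤ) : ℂ) = (|(k j : ℝ) - l j| : ℝ) := by
    rw [← ofReal_intCast]
    push_cast
    rfl
  rw [Pi.mul_apply, gammaRatio, gammaRatio, div_mul_div_comm, habs]
  push_cast
  ring_nf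

theorem half_le_add_sub_one_div_two {k l : ℕ} (hk : 0 < k) (hl : 0 < l) :
    (1 / 2 : ℝ) ≤ (k + l - 1) / 2 := by
  have hk1 : (1 : ℝ) ≤ k := Nat.one_le_cast.2 hk
  have hl1 : (1 : ℝ) ≤ l := Nat.one_le_cast.2 hl
  linarith

theorem rankinSelbergGamma_zero (hk : ∀ j, 0 < k j) (hl : ∀ j, 0 < l j) :
    rankinSelbergGamma n k l 0 = 1 := by
  rw [rankinSelbergGamma_eq_prod, Finset.prod_apply]
  refine Finset.prod_eq_one fun j _ => ?_
  rw [Pi.mul_apply, gammaRatio_zero, gammaRatio_zero, one_mul]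
  · exact one_half_pos.trans_le (half_le_add_sub_one_div_two (hk j) (hl j))
  · positivity

theorem differentiableAt_rankinSelbergGamma (hk : ∀ j, 0 < k j) (hl : ∀ j, 0 < l j) {u : ℂ}
    (hu : -(1 / 2) < u.re) : DifferentiableAt ℂ (rankinSelbergGamma n k l) u := by
  rw [rankinSelbergGamma_eq_prod]
  refine DifferentiableAt.finsetProd fun j _ => ?_
  exact (differentiableAt_gammaRatio
    (by linarith [half_le_one_add_abs_sub_div_two (k j) (l j)])).mul (differentiableAt_gammaRatio
    (by linarith [half_le_add_sub_one_div_two (hk j) (hl j)]))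

theorem rapidDecayOn_rankinSelbergGamma (hn : 1 ≤ n) (hk : ∀ j, 0 < k j) (hl : ∀ j, 0 < l j)
    {σ₁ σ₂ : ℝ} (hσ : -(1 / 2) < σ₁) :
    RapidDecayOn (rankinSelbergGamma n k l) (re ⁻¹' Icc σ₁ σ₂) := by
  rw [rankinSelbergGamma_eq_prod]
  refine RapidDecayOn.prod ⟨⟨0, hn⟩, Finset.mem_univ _⟩ fun j _ => ?_
  exact (rapidDecayOn_gammaRatio
    (by linarith [half_le_one_add_abs_sub_div_two (k j) (l j)])).mul (rapidDecayOn_gammaRatio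
    (by linarith [half_le_add_sub_one_div_two (hk j) (hl j)]))

theorem norm_rankinSelbergGamma_le (hk : ∀ j, 0 < k j) (hl : ∀ j, 0 < l j) {α : ℝ} (hα0 : 0 ≤ α)
    (hα1 : α < 1 / 2) {u : ℂ} (hu : u.re = -α) :
    ‖rankinSelbergGamma n k l u‖ ≤
      (∏ j, (1 - 2 * α)⁻¹ ^ 2 * (4 * l j : ℝ) ^ α) * (∏ j, (k j : ℝ) ^ 2) ^ (-α) := by
  rw [rankinSelbergGamma_eq_prod, Finset.prod_apply, norm_prod,
    ← Real.finsetProd_rpow _ _ fun _ _ => by positivity, ← Finset.prod_mul_distrib]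
  exact Finset.prod_le_prod (fun _ _ => norm_nonneg _) fun j _ =>
    norm_gammaRatio_mul_gammaRatio_le (Nat.one_le_cast.2 (hk j)) (Nat.one_le_cast.2 (hl j))
      hα0 hα1 hu

end RankinSelbergGamma

section CutOff

variable {n : ℕ} {k l : Fin n → ℕ} {G : ℂ → ℂ} {α : ℝ} {N : ℕ}

theorem rankinSelbergVIntegrand_eq (n : ℕ) (k l : Fin n → ℕ) (G : ℂ → ℂ) (y t : ℝ) :
    rankinSelbergVIntegrand n k l G y t = (y : ℂ) ^ (-((3 / 2 : ℝ) + t * I) : ℂ) •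
      ((3 / 2 : ℝ) + t * I : ℂ)⁻¹ • (G * rankinSelbergGamma n k l) ((3 / 2 : ℝ) + t * I) := by
  simp only [rankinSelbergVIntegrand, smul_eq_mul, Pi.mul_apply]
  push_cast
  ring

theorem rankinSelbergV_eq_mellinInv (n : ℕ) (k l : Fin n → ℕ) (G : ℂ → ℂ) :
    rankinSelbergV n k l G =
      mellinInv (3 / 2) fun u => u⁻¹ • (G * rankinSelbergGamma n k l) u := by
  funext y
  simp only [rankinSelbergV, mellinInv, rankinSelbergVIntegrand_eq, real_smul]
  push_cast
  rfl

theorem verticalIntegrable_eval_smul_inv_smul_mul_rankinSelbergGamma (hn : 1 ≤ n)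
    (hk : ∀ j, 0 < k j) (hl : ∀ j, 0 < l j) {σ : ℝ} (hσ : -(1 / 2) < σ) (hσ0 : σ ≠ 0)
    (hG : ContinuousOn G (re ⁻¹' {σ})) (hO : G =O[𝓟 (re ⁻¹' {σ})] fun u => (1 + ‖u‖) ^ N)
    (p : Polynomial ℂ) :
    VerticalIntegrable (fun u => p.eval u • u⁻¹ • (G * rankinSelbergGamma n k l) u) σ := by
  have hγ : RapidDecayOn (rankinSelbergGamma n k l) (re ⁻¹' {σ}) :=
    Icc_self σ ▸ rapidDecayOn_rankinSelbergGamma hn hk hl hσ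
  have hγcont : ContinuousOn (rankinSelbergGamma n k l) (re ⁻¹' {σ}) := fun u hu =>
    (differentiableAt_rankinSelbergGamma hk hl (hu ▸ hσ)).continuousAt.continuousWithinAt
  exact (hγ.smul_of_isBigO hO).verticalIntegrable_eval_smul_inv_smul hσ0 (hG.mul hγcont) p

theorem integrable_rankinSelbergVIntegrand (hn : 1 ≤ n) (hk : ∀ j, 0 < k j) (hl : ∀ j, 0 < l j)
    (hG : ContinuousOn G (re ⁻¹' {3 / 2}))
    (hO : G =O[𝓟 (re ⁻¹' {3 / 2})] fun u => (1 + ‖u‖) ^ N) {y : ℝ} (hy : 0 < y) :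
    Integrable (rankinSelbergVIntegrand n k l G y) := by
  have hint := verticalIntegrable_eval_smul_inv_smul_mul_rankinSelbergGamma hn hk hl
    (by norm_num) (by norm_num) hG hO 1
  simp only [Polynomial.eval_one, one_smul] at hint
  exact (integrable_ofReal_cpow_smul hy hint).congr
    (ae_of_all _ fun t => (rankinSelbergVIntegrand_eq n k l G y t).symm)

theorem contDiffOn_rankinSelbergV (hn : 1 ≤ n) (hk : ∀ j, 0 < k j) (hl : ∀ j, 0 < l j)
    (hG : ContinuousOn G (re ⁻¹' {3 / 2}))
    (hO : G =O[𝓟 (re ⁻¹' {3 / 2})] fun u => (1 + ‖u‖) ^ N) :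
    ContDiffOn ℝ ((⊤ : ℕ∞) : WithTop ℕ∞) (rankinSelbergV n k l G) (Ioi 0) :=
  rankinSelbergV_eq_mellinInv n k l G ▸ contDiffOn_mellinInv
    (verticalIntegrable_eval_smul_inv_smul_mul_rankinSelbergGamma hn hk hl
      (by norm_num) (by norm_num) hG hO)

theorem norm_pow_mul_iteratedDeriv_rankinSelbergV_sub_le (hn : 1 ≤ n)
    (hk : ∀ j, 0 < k j) (hl : ∀ j, 0 < l j) (hα0 : 0 < α) (hα1 : α < 1 / 2)
    (hG : DifferentiableOn ℂ G (re ⁻¹' Icc (-α) (3 / 2)))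
    (hO : G =O[𝓟 (re ⁻¹' Icc (-α) (3 / 2))] fun u => (1 + ‖u‖) ^ N) (a : ℕ) {C : ℝ}
    (hC : verticalL1Norm (fun u => (descPochhammer ℂ a).eval (-u) • u⁻¹ •
      (G * rankinSelbergGamma n k l) u) (-α) ≤ C * (∏ j, (k j : ℝ) ^ 2) ^ (-α))
    {y : ℝ} (hy : 0 < y) :
    ‖(y : ℂ) ^ a * iteratedDeriv a (rankinSelbergV n k l G) y - (if a = 0 then G 0 else 0)‖ ≤
      C * (y / ∏ j, (k j : ℝ) ^ 2) ^ α := by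
  have hP : 0 ≤ ∏ j, (k j : ℝ) ^ 2 := by positivity
  have hd : DifferentiableOn ℂ (G * rankinSelbergGamma n k l) (re ⁻¹' Icc (-α) (3 / 2)) :=
    hG.mul fun _ hu => (differentiableAt_rankinSelbergGamma hk hl
      ((neg_lt_neg hα1).trans_le hu.1)).differentiableWithinAt
  have hshift := norm_pow_smul_iteratedDeriv_mellinInv_inv_smul_sub_le (neg_lt_zero.2 hα0)
    (by norm_num) hd ((rapidDecayOn_rankinSelbergGamma hn hk hl (neg_lt_neg hα1)).smul_of_isBigO hO)
    a hy
  rw [← rankinSelbergV_eq_mellinInv, Pi.mul_apply, rankinSelbergGamma_zero hk hl, mul_one,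
    neg_neg, smul_eq_mul] at hshift
  calc _ ≤ y ^ α * verticalL1Norm (fun u => (descPochhammer ℂ a).eval (-u) • u⁻¹ •
        (G * rankinSelbergGamma n k l) u) (-α) := hshift
    _ ≤ y ^ α * (C * (∏ j, (k j : ℝ) ^ 2) ^ (-α)) := by gcongr
    _ = C * (y / ∏ j, (k j : ℝ) ^ 2) ^ α := by
      rw [Real.div_rpow hy.le hP, Real.rpow_neg hP, div_eq_mul_inv]
      ring

theorem verticalL1Norm_smul_mul_rankinSelbergGamma_le (hk : ∀ j, 0 < k j) (hl : ∀ j, 0 < l j)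
    (hα0 : 0 ≤ α) (hα1 : α < 1 / 2) {w : ℂ → ℂ}
    (hw : VerticalIntegrable (fun u => w u • u⁻¹ • G u) (-α)) :
    verticalL1Norm (fun u => w u • u⁻¹ • (G * rankinSelbergGamma n k l) u) (-α) ≤
      (∏ j, (1 - 2 * α)⁻¹ ^ 2 * (4 * l j : ℝ) ^ α) *
        verticalL1Norm (fun u => w u • u⁻¹ • G u) (-α) * (∏ j, (k j : ℝ) ^ 2) ^ (-α) := by
  rw [mul_right_comm]
  refine verticalL1Norm_le_mul hw fun u hu => ?_
  simp only [smul_eq_mul, Pi.mul_apply]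
  rw [← mul_assoc, ← mul_assoc, mul_assoc (w u), norm_mul _ (rankinSelbergGamma n k l u), mul_comm]
  gcongr
  exact norm_rankinSelbergGamma_le hk hl hα0 hα1 hu

end CutOff

theorem rankinSelbergV_iteratedDeriv_near_zero_general
    (n : ℕ) (hn : 1 ≤ n) (l : Fin n → ℕ) (hl : ∀ j, 0 < l j)
    (a : ℕ) (α : ℝ) (hα0 : 0 < α) (hα1 : α < 1 / 2)
    (G : ℂ → ℂ) (hG : DifferentiableOn ℂ G (re ⁻¹' Icc (-α) (3 / 2)))
    (hO : ∃ N : ℕ, G =O[𝓟 (re ⁻¹' Icc (-α) (3 / 2))] fun u => (1 + ‖u‖) ^ N) :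
    (∀ k : Fin n → ℕ, (∀ j, 0 < k j) →
      (∀ y : ℝ, 0 < y → Integrable (rankinSelbergVIntegrand n k l G y)) ∧
      ContDiffOn ℝ ((⊤ : ℕ∞) : WithTop ℕ∞) (rankinSelbergV n k l G) (Ioi 0) ∧
      ∃ C > (0 : ℝ), ∀ y : ℝ, 0 < y →
        ‖(y : ℂ) ^ a * iteratedDeriv a (rankinSelbergV n k l G) y - (if a = 0 then G 0 else 0)‖ ≤
          C * (y / ∏ j : Fin n, (k j : ℝ) ^ 2) ^ α) ∧
    (G =O[𝓟 (re ⁻¹' {-α})] (fun u => ((1 + ‖u‖) ^ (a + 1))⁻¹) →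
      ∃ C > (0 : ℝ), ∀ k : Fin n → ℕ, (∀ j, 0 < k j) → ∀ y : ℝ, 0 < y →
        ‖(y : ℂ) ^ a * iteratedDeriv a (rankinSelbergV n k l G) y - (if a = 0 then G 0 else 0)‖ ≤
          C * (y / ∏ j : Fin n, (k j : ℝ) ^ 2) ^ α) := by
  obtain ⟨N, hO⟩ := hO
  have hline {σ : ℝ} (hσ : σ ∈ Icc (-α) (3 / 2)) : re ⁻¹' {σ} ⊆ re ⁻¹' Icc (-α) (3 / 2) :=
    preimage_mono (singleton_subset_iff.2 hσ)
  have hright := hline (right_mem_Icc.2 (by linarith))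
  have hGright := hG.continuousOn.mono hright
  have hOright := hO.mono (principal_mono.2 hright)
  refine ⟨fun k hk => ⟨fun y => integrable_rankinSelbergVIntegrand hn hk hl hGright hOright,
    contDiffOn_rankinSelbergV hn hk hl hGright hOright, ?_⟩, fun hdecay => ?_⟩
  · have hP : 0 < ∏ j, (k j : ℝ) ^ 2 :=
      Finset.prod_pos fun j _ => pow_pos (Nat.cast_pos.2 (hk j)) 2
    set M := verticalL1Norm (fun u => (descPochhammer ℂ a).eval (-u) • u⁻¹ •
      (G * rankinSelbergGamma n k l) u) (-α) with hM
    refine ⟨max (M * (∏ j, (k j : ℝ) ^ 2) ^ α) 1, lt_max_of_lt_right one_pos, fun y hy =>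
      norm_pow_mul_iteratedDeriv_rankinSelbergV_sub_le hn hk hl hα0 hα1 hG hO a ?_ hy⟩
    rw [← hM, Real.rpow_neg hP.le]
    exact (le_mul_inv_iff₀ (Real.rpow_pos_of_pos hP α)).2 (le_max_left _ 1)
  · have hint := verticalIntegrable_descPochhammer_eval_neg_smul_inv_smul (neg_ne_zero.2 hα0.ne')
      (hG.continuousOn.mono (hline (left_mem_Icc.2 (by linarith)))) hdecay
    exact ⟨max _ 1, lt_max_of_lt_right one_pos, fun k hk y hy =>
      norm_pow_mul_iteratedDeriv_rankinSelbergV_sub_le hn hk hl hα0 hα1 hG hO a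
        ((verticalL1Norm_smul_mul_rankinSelbergGamma_le hk hl hα0.le hα1 hint).trans
          (mul_le_mul_of_nonneg_right (le_max_left _ 1) (by positivity))) hy⟩

theorem abs_re_le_of_mem_preimage_Icc_neg {α β : ℝ} (hαβ : α ≤ β) {u : ℂ}
    (hu : u ∈ re ⁻¹' Icc (-α) β) : |u.re| ≤ β :=
  abs_le.2 ⟨(neg_le_neg hαβ).trans hu.1, hu.2⟩

namespace IsAdmissibleTestFunction

variable {G : ℂ → ℂ} {α : ℝ}

theorem differentiableOn (hG : IsAdmissibleTestFunction G) (hα : α ≤ 3 / 2) :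
    DifferentiableOn ℂ G (re ⁻¹' Icc (-α) (3 / 2)) :=
  have ⟨_, _, hU, hd⟩ := hG.holomorphic
  hd.mono fun _ hu => hU (abs_re_le_of_mem_preimage_Icc_neg hα hu)

theorem isBigO_one_add_norm_pow_zero (hG : IsAdmissibleTestFunction G) (hα : α ≤ 3 / 2) :
    G =O[𝓟 (re ⁻¹' Icc (-α) (3 / 2))] fun u => (1 + ‖u‖) ^ 0 :=
  have ⟨M, hM⟩ := hG.bounded
  isBigO_principal.2 ⟨M, fun u hu => by
    simpa using hM u (abs_re_le_of_mem_preimage_Icc_neg hα hu)⟩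

end IsAdmissibleTestFunction

/-- Behaviour of the cut-off function near zero. The first part is for fixed weights `k`, `l` and an
arbitrary admissible `G`; the second gives a constant that is uniform in `k` as soon as
`G(u) = O((1+|u|)^{-a-1})` in the strip (for `G = 1` and `a ≥ 1` uniformity in `k` fails). -/
theorem rankinSelbergV_iteratedDeriv_near_zero
    (n : ℕ) (hn : 1 ≤ n) (l : Fin n → ℕ) (hl : ∀ j, Even (l j) ∧ 0 < l j)
    (G : ℂ → ℂ) (hG : IsAdmissibleTestFunction G)
    (a : ℕ) (α : ℝ) (hα0 : 0 < α) (hα1 : α < 1 / 2) :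
    (∀ k : Fin n → ℕ, (∀ j, Even (k j) ∧ 0 < k j) →
      (∀ y : ℝ, 0 < y → MeasureTheory.Integrable (rankinSelbergVIntegrand n k l G y)) ∧
      ContDiffOn ℝ ((⊤ : ℕ∞) : WithTop ℕ∞) (rankinSelbergV n k l G) (Set.Ioi 0) ∧
      ∃ C > (0 : ℝ), ∀ y : ℝ, 0 < y →
        ‖(y : ℂ) ^ a * iteratedDeriv a (rankinSelbergV n k l G) y -
            (if a = 0 then 1 else 0)‖ ≤
          C * (y / ∏ j : Fin n, (k j : ℝ) ^ 2) ^ α) ∧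
    ((∃ B : ℝ, ∀ u : ℂ, |u.re| ≤ 3 / 2 → (1 + ‖u‖) ^ (a + 1) * ‖G u‖ ≤ B) →
      ∃ C > (0 : ℝ), ∀ k : Fin n → ℕ, (∀ j, Even (k j) ∧ 0 < k j) →
        ∀ y : ℝ, 0 < y →
          ‖(y : ℂ) ^ a * iteratedDeriv a (rankinSelbergV n k l G) y -
              (if a = 0 then 1 else 0)‖ ≤
            C * (y / ∏ j : Fin n, (k j : ℝ) ^ 2) ^ α) := by
  have hα : α ≤ 3 / 2 := by linarith
  obtain ⟨hfixed, huniform⟩ := hG.map_zero ▸ rankinSelbergV_iteratedDeriv_near_zero_general n hn l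
    (fun j => (hl j).2) a α hα0 hα1 G (hG.differentiableOn hα)
    ⟨0, hG.isBigO_one_add_norm_pow_zero hα⟩
  refine ⟨fun k hk => hfixed k fun j => (hk j).2, fun ⟨B, hB⟩ => ?_⟩
  have hline : ∀ u ∈ re ⁻¹' {-α}, |u.re| ≤ 3 / 2 := fun u hu => by
    rwa [mem_singleton_iff.1 hu, abs_neg, abs_of_pos hα0]
  obtain ⟨C, hC, hbound⟩ :=
    huniform (isBigO_inv_one_add_norm_pow_of_mul_norm_le fun u hu => hB u (hline u hu))
  exact ⟨C, hC, fun k hk => hbound k fun j => (hk j).2⟩
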